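/- arXiv:1812.10545 — 4 statements merged into one kernel-verified Lean document; each statement's English description precedes it below -/
import Mathlib

section
/- Let N be a positive integer, let κ_1,…,κ_N be real numbers with κ_n + κ_m ≠ 0 for all n,m, and let d_1,…,d_N be real numbers. Then the determinant of the N×N matrix with entries δ_{nm} + d_n/(κ_n + κ_m) equals the sum over all subsets I ⊆ {1,…,N} of ∏_{i,j∈I, i<j} ((κ_i−κ_j)²/(κ_i+κ_j)²) · ∏_{i∈I} d_i/(2κ_i), where the empty subset contributes 1. -/
open Finset

/-!
Since `det (1 + M)` is the sum of all principal minors of `M`, the expansion amounts to evaluating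
the principal minors of `d n / (κ n + κ m)`, which are Cauchy determinants up to the factors `d n`.
A Cauchy determinant is found by removing its largest index: the Schur complement of the
corresponding diagonal entry is the smaller Cauchy matrix with rows and columns rescaled, and the
scaling factors are the factors of the product formula that involve the removed index.
-/

section PrincipalMinor

variable {ι R : Type*} [DecidableEq ι] [CommRing R]

/-- The principal minor of `M` with row and column set `s`. The index type `ι` need not be finite,
so that a minor can be computed by induction on `s`. -/
def principalMinor (M : Matrix ι ι R) (s : Finset ι) : R :=
  (M.submatrix ((↑) : s → ι) (↑)).det

theorem principalMinor_empty (M : Matrix ι ι R) : principalMinor M ∅ = 1 :=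
  Matrix.det_isEmpty

theorem principalMinor_congr {A B : Matrix ι ι R} {s : Finset ι}
    (h : ∀ i ∈ s, ∀ j ∈ s, A i j = B i j) : principalMinor A s = principalMinor B s :=
  congrArg Matrix.det (Matrix.ext fun i j => h i i.2 j j.2)

theorem principalMinor_mul_column (v : ι → R) (A : Matrix ι ι R) (s : Finset ι) :
    principalMinor (.of fun i j => v i * A i j) s = (∏ i ∈ s, v i) * principalMinor A s := by
  rw [← prod_coe_sort]
  exact Matrix.det_mul_column (fun i : s => v i) (A.submatrix (↑) (↑))

theorem principalMinor_mul_row (v : ι → R) (A : Matrix ι ι R) (s : Finset ι) :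
    principalMinor (.of fun i j => v j * A i j) s = (∏ i ∈ s, v i) * principalMinor A s := by
  rw [← prod_coe_sort]
  exact Matrix.det_mul_row (fun i : s => v i) (A.submatrix (↑) (↑))

theorem det_one_add_eq_sum_principalMinor [Fintype ι] (M : Matrix ι ι R) :
    (1 + M).det = ∑ s : Finset ι, principalMinor M s :=
  calc (1 + M).det = (M + 1).det := by rw [add_comm]
    _ = ∑ s : Finset ι, (Matrix.of (s.piecewise M.row (1 : Matrix ι ι R).row)).det :=
      Matrix.detRowAlternating.map_add_univ M.row (1 : Matrix ι ι R).row
    _ = ∑ s : Finset ι, principalMinor M s :=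
      sum_congr rfl fun s _ => Matrix.det_piecewise_one_eq_submatrix_det M s

theorem principalMinor_insert {K : Type*} [Field K] (M : Matrix ι ι K) {a : ι} {s : Finset ι}
    (ha : a ∉ s) (hM : M a a ≠ 0) :
    principalMinor M (insert a s) =
      M a a * principalMinor (.of fun i j => M i j - M i a * M a j / M a a) s := by
  let e : s ⊕ Unit ≃ ↥(insert a s) :=
    ((subtypeInsertEquivOption ha).trans (Equiv.optionEquivSumPUnit _)).symm
  let D : Matrix Unit Unit K := .of fun _ _ => M a a
  let : Invertible D :=
    ⟨.of fun _ _ => (M a a)⁻¹, by ext; simp [D, Matrix.mul_apply, hM],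
      by ext; simp [D, Matrix.mul_apply, hM]⟩
  let col : Matrix s Unit K := .of fun i _ => M i a
  let row : Matrix Unit s K := .of fun _ j => M a j
  have blocks : (M.submatrix ((↑) : ↥(insert a s) → ι) (↑)).submatrix e e =
      .fromBlocks (M.submatrix ((↑) : s → ι) (↑)) col row D := by
    ext (i | i) (j | j) <;> rfl
  have schur : M.submatrix ((↑) : s → ι) (↑) - col * ⅟D * row =
      Matrix.submatrix (.of fun i j => M i j - M i a * M a j / M a a) (↑) (↑) := by
    have invOf_D : ⅟D = .of fun _ _ => (M a a)⁻¹ := rfl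
    ext i j
    simp [col, row, invOf_D, Matrix.mul_apply, div_eq_mul_inv, mul_right_comm]
  rw [principalMinor, ← Matrix.det_submatrix_equiv_self e, blocks, Matrix.det_fromBlocks₂₂,
    schur, Matrix.det_unique D]
  rfl

end PrincipalMinor

theorem prod_prod_filter_lt_insert {ι M : Type*} [LinearOrder ι] [CommMonoid M] {a : ι}
    {s : Finset ι} (ha : ∀ i ∈ s, i < a) (f : ι → ι → M) :
    ∏ i ∈ insert a s, ∏ j ∈ insert a s with i < j, f i j =
      (∏ i ∈ s, f i a) * ∏ i ∈ s, ∏ j ∈ s with i < j, f i j := by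
  have ha_notMem : a ∉ s := fun h => (ha a h).false
  have row_a : (insert a s).filter (a < ·) = ∅ :=
    filter_eq_empty_iff.2 <| by simpa using fun i hi => (ha i hi).le
  rw [prod_insert ha_notMem, row_a, prod_empty, one_mul, ← prod_mul_distrib]
  refine prod_congr rfl fun i hi => ?_
  rw [filter_insert, if_pos (ha i hi), prod_insert (by simp [ha_notMem])]

section Cauchy

variable {m n ι K : Type*} [Field K]

/-- The Cauchy matrix of `x` and `y`, with the sign convention `1 / (x i + y j)` rather than
`1 / (x i - y j)`. Scaling row `n` of `cauchyMatrix κ κ` by `d n` gives the matrix whose sum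
with the identity appears in the soliton construction. -/
def cauchyMatrix (x : m → K) (y : n → K) : Matrix m n K :=
  .of fun i j => (x i + y j)⁻¹

theorem cauchyMatrix_apply (x : m → K) (y : n → K) (i : m) (j : n) :
    cauchyMatrix x y i j = (x i + y j)⁻¹ :=
  rfl

theorem cauchyMatrix_schurComplement_apply {x : m → K} {y : n → K} {a i : m} {b j : n}
    (hib : x i + y b ≠ 0) (haj : x a + y j ≠ 0) (hij : x i + y j ≠ 0) :
    cauchyMatrix x y i j - cauchyMatrix x y i b * cauchyMatrix x y a j / cauchyMatrix x y a b =
      (x a - x i) / (x i + y b) * ((y b - y j) / (x a + y j) * cauchyMatrix x y i j) := by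
  simp only [cauchyMatrix_apply]
  field_simp
  ring

variable [LinearOrder ι]

theorem principalMinor_cauchyMatrix {x y : ι → K} {s : Finset ι}
    (h : ∀ i ∈ s, ∀ j ∈ s, x i + y j ≠ 0) :
    principalMinor (cauchyMatrix x y) s =
      (∏ i ∈ s, ∏ j ∈ s with i < j, (x j - x i) * (y j - y i) / ((x i + y j) * (x j + y i))) *
        ∏ i ∈ s, (x i + y i)⁻¹ := by
  induction s using Finset.induction_on_max with
  | empty => simp [principalMinor_empty]
  | insert a s ha ih =>
    have ha_notMem : a ∉ s := fun hs => (ha a hs).false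
    simp only [forall_mem_insert] at h
    have schur : principalMinor (.of fun i j => cauchyMatrix x y i j -
          cauchyMatrix x y i a * cauchyMatrix x y a j / cauchyMatrix x y a a) s =
        (∏ i ∈ s, (x a - x i) / (x i + y a)) *
          ((∏ j ∈ s, (y a - y j) / (x a + y j)) * principalMinor (cauchyMatrix x y) s) := by
      rw [← principalMinor_mul_row, ← principalMinor_mul_column]
      exact principalMinor_congr fun i hi j hj =>
        cauchyMatrix_schurComplement_apply (h.2 i hi).1 (h.1.2 j hj) ((h.2 i hi).2 j hj)
    rw [principalMinor_insert _ ha_notMem (inv_ne_zero h.1.1), schur,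
      ih fun i hi => (h.2 i hi).2, prod_prod_filter_lt_insert ha, prod_insert ha_notMem,
      cauchyMatrix_apply]
    simp only [mul_div_mul_comm, prod_mul_distrib]
    ring

theorem principalMinor_cauchyMatrix_self {κ : ι → K} {s : Finset ι}
    (hκ : ∀ i ∈ s, ∀ j ∈ s, κ i + κ j ≠ 0) :
    principalMinor (cauchyMatrix κ κ) s =
      (∏ i ∈ s, ∏ j ∈ s with i < j, (κ i - κ j) ^ 2 / (κ i + κ j) ^ 2) *
        ∏ i ∈ s, (2 * κ i)⁻¹ := by
  rw [principalMinor_cauchyMatrix hκ]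
  have pair_factor (i j : ι) : (κ j - κ i) * (κ j - κ i) / ((κ i + κ j) * (κ j + κ i)) =
      (κ i - κ j) ^ 2 / (κ i + κ j) ^ 2 := by
    rw [add_comm (κ j), ← sq, ← sq, sub_sq_comm]
  simp only [pair_factor, two_mul]

theorem soliton_determinant_expansion_general [Fintype ι] (κ d : ι → K)
    (hκ : ∀ n m, κ n + κ m ≠ 0) :
    (Matrix.of fun n m : ι => (if n = m then (1 : K) else 0) + d n / (κ n + κ m)).det =
      ∑ I : Finset ι,
        (∏ i ∈ I, ∏ j ∈ I with i < j, (κ i - κ j) ^ 2 / (κ i + κ j) ^ 2) *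
          ∏ i ∈ I, d i / (2 * κ i) := by
  have rescaled : (Matrix.of fun n m : ι => (if n = m then (1 : K) else 0) + d n / (κ n + κ m)) =
      1 + .of fun n m => d n * cauchyMatrix κ κ n m := by
    ext n m
    simp [Matrix.one_apply, cauchyMatrix_apply, div_eq_mul_inv]
  rw [rescaled, det_one_add_eq_sum_principalMinor]
  refine sum_congr rfl fun I _ => ?_
  rw [principalMinor_mul_column, principalMinor_cauchyMatrix_self fun i _ j _ => hκ i j]
  simp only [div_eq_mul_inv (d _), prod_mul_distrib]
  ring

end Cauchy

/-- The determinant of the matrix `δ_{nm} + d_n/(κ_n + κ_m)` equals the soliton tau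
function sum over all subsets `I ⊆ {1,…,N}`. -/
theorem soliton_determinant_expansion (N : ℕ) (hN : 0 < N) (κ d : Fin N → ℝ)
    (hκ : ∀ n m, κ n + κ m ≠ 0) :
    (Matrix.of fun n m : Fin N =>
        (if n = m then (1 : ℝ) else 0) + d n / (κ n + κ m)).det =
      ∑ I : Finset (Fin N),
        (∏ i ∈ I, ∏ j ∈ I.filter (fun j => i < j),
            ((κ i - κ j) ^ 2 / (κ i + κ j) ^ 2)) *
          ∏ i ∈ I, d i / (2 * κ i) :=
  soliton_determinant_expansion_general κ d hκ
end

section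
/- Let κ_1,…,κ_N be distinct positive real numbers, and set q_n = ∏_{m≠n} |(κ_n+κ_m)/(κ_n−κ_m)| for n = 1,…,N. Define A(x) = Σ_{I ⊆ {1,…,N}} ∏_{i,j∈I, i<j} ((κ_i−κ_j)²/(κ_i+κ_j)²) ∏_{i∈I} q_i e^{−2κ_i x}, and let Φ = κ_1 + ⋯ + κ_N. Then the function Ã(x) = e^{Φx} A(x) is even: Ã(−x) = Ã(x) for all x ∈ ℝ. -/
open Finset

/-!
Put `r i j = |(κ i + κ j) / (κ i - κ j)|`, which is symmetric. The interaction factor of a pair is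
`(r i j)⁻²`, and it cancels exactly the two factors `r i j` and `r j i` contributed by `q i` and
`q j` when both indices lie in `I`. What is left of the coefficient of `I` is the product of `r`
over the pairs separated by `I`, while `e^{Φx}` turns the exponentials into
`∏ i ∈ I, e^{-κ i x}` times `∏ i ∉ I, e^{κ i x}`. Replacing `I` by its complement preserves the
coefficient and exchanges `x` with `-x`.
-/

section PairProducts

variable {ι M : Type*} [CommMonoid M]

theorem prod_prod_erase_eq_prod_prod_filter_lt [LinearOrder ι] (s : Finset ι) (f : ι → ι → M) :
    ∏ i ∈ s, ∏ j ∈ s.erase i, f i j = ∏ i ∈ s, ∏ j ∈ s with i < j, f i j * f j i := by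
  have split_erase (i : ι) :
      ∏ j ∈ s.erase i, f i j = (∏ j ∈ s with i < j, f i j) * ∏ j ∈ s with j < i, f i j := by
    rw [← prod_union (disjoint_filter.2 fun j _ hij hji => hij.asymm hji)]
    congr 1
    grind
  have transpose :
      ∏ i ∈ s, ∏ j ∈ s with j < i, f i j = ∏ i ∈ s, ∏ j ∈ s with i < j, f j i :=
    prod_comm' (by grind)
  simp only [split_erase, prod_mul_distrib, transpose]

variable [Fintype ι] [DecidableEq ι]

/-- The weight of the cut `(I, Iᶜ)` in the complete graph on `ι`, where the weight `r i j` of an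
edge directed from `i` to `j` enters multiplicatively. These are the coefficients of the tau
function for the symmetric phases. -/
def cutWeight (r : ι → ι → M) (I : Finset ι) : M :=
  ∏ i ∈ I, ∏ j ∈ Iᶜ, r i j

theorem cutWeight_compl {r : ι → ι → M} (hr : ∀ i j, r i j = r j i) (I : Finset ι) :
    cutWeight r Iᶜ = cutWeight r I := by
  unfold cutWeight
  rw [compl_compl, prod_comm]
  simp only [hr]

theorem prod_prod_erase_univ_eq_mul_cutWeight (r : ι → ι → M) (I : Finset ι) :
    ∏ i ∈ I, ∏ j ∈ univ.erase i, r i j = (∏ i ∈ I, ∏ j ∈ I.erase i, r i j) * cutWeight r I := by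
  unfold cutWeight
  rw [← prod_mul_distrib]
  refine prod_congr rfl fun i hi => ?_
  rw [← prod_union (disjoint_compl_right.mono_left (erase_subset i I))]
  congr 1
  grind [mem_compl]

end PairProducts

theorem prod_filter_lt_mul_prod_erase_univ_eq_cutWeight {ι M : Type*} [CommMonoid M] [Fintype ι]
    [LinearOrder ι] {r s : ι → ι → M} (hrs : ∀ i j, i < j → s i j * (r i j * r j i) = 1)
    (I : Finset ι) :
    (∏ i ∈ I, ∏ j ∈ I with i < j, s i j) * ∏ i ∈ I, ∏ j ∈ univ.erase i, r i j =
      cutWeight r I := by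
  have pairs_cancel :
      (∏ i ∈ I, ∏ j ∈ I with i < j, s i j) * ∏ i ∈ I, ∏ j ∈ I.erase i, r i j = 1 := by
    simp only [prod_prod_erase_eq_prod_prod_filter_lt, ← prod_mul_distrib]
    exact prod_eq_one fun i _ => prod_eq_one fun j hj => hrs i j (mem_filter.1 hj).2
  rw [prod_prod_erase_univ_eq_mul_cutWeight, ← mul_assoc, pairs_cancel, one_mul]

section CutSum

variable {ι R : Type*} [Fintype ι] [DecidableEq ι] [CommSemiring R]

/-- The generating function of the cut weights: the elements of `I` are marked by `u`, those of
its complement by `v`. -/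
def cutSum (r : ι → ι → R) (u v : ι → R) : R :=
  ∑ I : Finset ι, cutWeight r I * ((∏ i ∈ I, u i) * ∏ i ∈ Iᶜ, v i)

theorem cutSum_comm {r : ι → ι → R} (hr : ∀ i j, r i j = r j i) (u v : ι → R) :
    cutSum r u v = cutSum r v u :=
  Fintype.sum_bijective compl compl_bijective _ _ fun I => by
    rw [cutWeight_compl hr, compl_compl, mul_comm (∏ i ∈ I, u i)]

end CutSum

section Soliton

variable {ι : Type*}

/-- The factor `|(κ i + κ j) / (κ i - κ j)|` which `j` contributes to the symmetric phase `q i`;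
its inverse square is the interaction factor of the pair in the tau function. On the diagonal it
has the junk value `0`. -/
noncomputable def pairRatio (κ : ι → ℝ) (i j : ι) : ℝ :=
  |(κ i + κ j) / (κ i - κ j)|

theorem pairRatio_comm (κ : ι → ℝ) (i j : ι) : pairRatio κ i j = pairRatio κ j i := by
  simp only [pairRatio, abs_div, add_comm, abs_sub_comm]

theorem sq_div_sq_mul_pairRatio {κ : ι → ℝ} {i j : ι} (hadd : κ i + κ j ≠ 0) (hne : κ i ≠ κ j) :
    (κ i - κ j) ^ 2 / (κ i + κ j) ^ 2 * (pairRatio κ i j * pairRatio κ j i) = 1 := by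
  have hsub : κ i - κ j ≠ 0 := sub_ne_zero.2 hne
  rw [pairRatio_comm κ j i, pairRatio, abs_mul_abs_self]
  field_simp

/-- The phase parameters `q` for which the soliton configuration is invariant under reflection
`x ↦ -x`. -/
noncomputable def symmetricPhase [Fintype ι] [DecidableEq ι] (κ : ι → ℝ) (i : ι) : ℝ :=
  ∏ j ∈ univ.erase i, pairRatio κ i j

/-- The multi-soliton tau function `A` at time `0`, with soliton parameters `κ` and phase
parameters `q`. The order on `ι` only serves to list each pair of solitons once. -/
noncomputable def solitonTau [Fintype ι] [LinearOrder ι] (κ q : ι → ℝ) (x : ℝ) : ℝ :=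
  ∑ I : Finset ι,
    (∏ i ∈ I, ∏ j ∈ I with i < j, (κ i - κ j) ^ 2 / (κ i + κ j) ^ 2) *
      ∏ i ∈ I, q i * Real.exp (-2 * κ i * x)

theorem exp_sum_mul_prod_exp_neg_two_mul [Fintype ι] [DecidableEq ι] (κ : ι → ℝ) (x : ℝ)
    (I : Finset ι) :
    Real.exp ((∑ i, κ i) * x) * ∏ i ∈ I, Real.exp (-2 * κ i * x) =
      (∏ i ∈ I, Real.exp (κ i * -x)) * ∏ i ∈ Iᶜ, Real.exp (κ i * x) := by
  rw [sum_mul, Real.exp_sum, ← prod_mul_prod_compl I, mul_right_comm, ← prod_mul_distrib]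
  congr 1
  refine prod_congr rfl fun i _ => ?_
  rw [← Real.exp_add]
  congr 1
  ring

variable [Fintype ι] [LinearOrder ι] {κ : ι → ℝ}

theorem exp_mul_solitonTau_eq_cutSum (hadd : ∀ i j, i ≠ j → κ i + κ j ≠ 0)
    (hinj : Function.Injective κ) (x : ℝ) :
    Real.exp ((∑ i, κ i) * x) * solitonTau κ (symmetricPhase κ) x =
      cutSum (pairRatio κ) (fun i => Real.exp (κ i * -x)) (fun i => Real.exp (κ i * x)) := by
  rw [solitonTau, cutSum, mul_sum]
  refine sum_congr rfl fun I _ => ?_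
  have coefficient :
      (∏ i ∈ I, ∏ j ∈ I with i < j, (κ i - κ j) ^ 2 / (κ i + κ j) ^ 2) *
        ∏ i ∈ I, symmetricPhase κ i = cutWeight (pairRatio κ) I :=
    prod_filter_lt_mul_prod_erase_univ_eq_cutWeight
      (fun i j hij => sq_div_sq_mul_pairRatio (hadd i j hij.ne) (hinj.ne hij.ne)) I
  rw [prod_mul_distrib, ← mul_assoc (∏ i ∈ I, _), coefficient, mul_left_comm,
    exp_sum_mul_prod_exp_neg_two_mul]

theorem symmetric_tau_is_even_general (hadd : ∀ i j, i ≠ j → κ i + κ j ≠ 0)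
    (hinj : Function.Injective κ) :
    Function.Even fun x =>
      Real.exp ((∑ i, κ i) * x) * solitonTau κ (symmetricPhase κ) x := by
  intro x
  simp only [exp_mul_solitonTau_eq_cutSum hadd hinj, neg_neg]
  exact cutSum_comm (pairRatio_comm κ) _ _

end Soliton

/-- For the symmetric choice of phases `q_n = ∏_{m≠n} |(κ_n+κ_m)/(κ_n−κ_m)|`,
the modified tau function `Ã(x) = e^{Φx} A(x)` is even. -/
theorem symmetric_tau_is_even (N : ℕ) (hN : 0 < N) (κ : Fin N → ℝ)
    (hpos : ∀ n, 0 < κ n) (hinj : Function.Injective κ)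
    (q : Fin N → ℝ)
    (hq : ∀ n, q n = ∏ m ∈ univ.erase n, |(κ n + κ m) / (κ n - κ m)|)
    (A : ℝ → ℝ)
    (hA : A = fun x => ∑ I : Finset (Fin N),
        (∏ i ∈ I, ∏ j ∈ I.filter (fun j => i < j),
            ((κ i - κ j) ^ 2 / (κ i + κ j) ^ 2)) *
          ∏ i ∈ I, q i * Real.exp (-2 * κ i * x))
    (Φ : ℝ) (hΦ : Φ = ∑ n, κ n) :
    ∀ x : ℝ, Real.exp (Φ * (-x)) * A (-x) = Real.exp (Φ * x) * A x := by
  obtain rfl : q = symmetricPhase κ := funext hq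
  subst hA hΦ
  exact symmetric_tau_is_even_general (fun i j _ => (add_pos (hpos i) (hpos j)).ne') hinj
end

section
/- Let A < B be real numbers, let f : [A,B] → ℝ be Hölder continuous with exponent γ ∈ (0,1] (i.e., there is C ≥ 0 with |f(r)−f(r')| ≤ C|r−r'|^γ for all r, r' ∈ [A,B]), and let s ∈ (A,B). Then the limit lim_{ε→0⁺} ( ∫_A^{s−ε} f(r)/(r−s) dr + ∫_{s+ε}^B f(r)/(r−s) dr ) exists (is a real number). -/
open Filter Topology intervalIntegral

/-!
Write `f r / (r - s) = (f r - f s) / (r - s) + f s / (r - s)`. The Hölder bound dominates the first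
term by `C * |r - s| ^ (γ - 1)`, which is integrable because `γ > 0`, so its principal value is an
ordinary integral. In the second term the truncated integrals of `1 / (r - s)` on the two sides of
`s` contribute `log ε` and `-log ε`, which cancel.
-/

section PrincipalValue

open Set MeasureTheory
open scoped NNReal

lemma holderOnWith_of_dist_le {X Y : Type*} [PseudoMetricSpace X] [PseudoMetricSpace Y]
    {C γ : ℝ≥0} {f : X → Y} {t : Set X}
    (hf : ∀ x ∈ t, ∀ y ∈ t, dist (f x) (f y) ≤ C * dist x y ^ (γ : ℝ)) : HolderOnWith C γ f t := by
  intro x hx y hy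
  rw [edist_nndist, edist_nndist, ← ENNReal.coe_rpow_of_nonneg _ γ.coe_nonneg]
  exact_mod_cast hf x hx y hy

lemma intervalIntegrable_abs_sub_rpow {p : ℝ} (hp : -1 < p) (a b c : ℝ) :
    IntervalIntegrable (fun r : ℝ => |r - c| ^ p) volume a b := by
  have habs : IntervalIntegrable (fun r : ℝ => |r| ^ p) volume (a - c) (b - c) := by
    refine intervalIntegrable_of_even (fun r => by rw [abs_neg]) fun x hx => ?_
    refine (intervalIntegrable_rpow' hp).congr fun r hr => ?_
    rw [uIoc_of_le hx.le] at hr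
    simp only [abs_of_pos hr.1]
  simpa only [sub_add_cancel] using habs.comp_sub_right c

lemma integral_inv_sub {a b c : ℝ} (hc : c ∉ uIcc a b) :
    ∫ r in a..b, (r - c)⁻¹ = Real.log (b - c) - Real.log (a - c) := by
  have hne : ∀ x ∈ uIcc a b, x - c ≠ 0 := fun x hx =>
    sub_ne_zero.2 (ne_of_mem_of_not_mem hx hc)
  have hzero : (0 : ℝ) ∉ uIcc (a - c) (b - c) := by
    rw [← image_sub_const_uIcc]
    rintro ⟨x, hx, hx0⟩
    exact hne x hx hx0
  rw [integral_comp_sub_right (fun x : ℝ => x⁻¹) c, integral_inv hzero,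
    Real.log_div (hne b right_mem_uIcc) (hne a left_mem_uIcc)]

variable {E : Type*} [NormedAddCommGroup E] [NormedSpace ℝ E]
  {f g : ℝ → E} {A B s : ℝ} {L M : E}

/-- `HasPVIntegral g A B s L` says that the principal value of `∫ r in A..B, g r` at the singularity
`s` is `L`. Integrability of `g` on the truncated intervals is part of the definition, so that `L`
is never a limit of junk values of the integral. -/
structure HasPVIntegral (g : ℝ → E) (A B s : ℝ) (L : E) : Prop where
  eventually_intervalIntegrable : ∀ᶠ ε : ℝ in 𝓝[>] 0,
    IntervalIntegrable g volume A (s - ε) ∧ IntervalIntegrable g volume (s + ε) B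
  tendsto : Tendsto
    (fun ε : ℝ => (∫ r in A..(s - ε), g r) + ∫ r in (s + ε)..B, g r) (𝓝[>] 0) (𝓝 L)

lemma HasPVIntegral.add (hf : HasPVIntegral f A B s L) (hg : HasPVIntegral g A B s M) :
    HasPVIntegral (fun r => f r + g r) A B s (L + M) where
  eventually_intervalIntegrable := by
    filter_upwards [hf.eventually_intervalIntegrable, hg.eventually_intervalIntegrable]
      with ε hfε hgε
    exact ⟨hfε.1.add hgε.1, hfε.2.add hgε.2⟩
  tendsto := by
    refine (hf.tendsto.add hg.tendsto).congr' ?_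
    filter_upwards [hf.eventually_intervalIntegrable, hg.eventually_intervalIntegrable]
      with ε hfε hgε
    rw [integral_add hfε.1 hgε.1, integral_add hfε.2 hgε.2, add_add_add_comm]

lemma HasPVIntegral.smul_const [CompleteSpace E] {φ : ℝ → ℝ} {l : ℝ}
    (hφ : HasPVIntegral φ A B s l) (v : E) :
    HasPVIntegral (fun r => φ r • v) A B s (l • v) where
  eventually_intervalIntegrable := hφ.eventually_intervalIntegrable.mono fun _ hε =>
    ⟨hε.1.smul_continuousOn continuousOn_const, hε.2.smul_continuousOn continuousOn_const⟩
  tendsto := by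
    simpa only [intervalIntegral.integral_smul_const, ← add_smul] using hφ.tendsto.smul_const v

lemma eventually_lt_sub_and_add_lt (hs : s ∈ Ioo A B) :
    ∀ᶠ ε : ℝ in 𝓝[>] 0, 0 < ε ∧ A < s - ε ∧ s + ε < B := by
  filter_upwards [Ioo_mem_nhdsGT (sub_pos.2 hs.1), Ioo_mem_nhdsGT (sub_pos.2 hs.2)] with ε hA hB
  exact ⟨hA.1, lt_sub_comm.1 hA.2, lt_sub_iff_add_lt'.1 hB.2⟩

lemma hasPVIntegral_of_intervalIntegrable (hg : IntervalIntegrable g volume A B)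
    (hs : s ∈ Ioo A B) : HasPVIntegral g A B s (∫ r in A..B, g r) := by
  have hAB : A ≤ B := (hs.1.trans hs.2).le
  have hsub : ∀ {a b : ℝ}, a ∈ Icc A B → b ∈ Icc A B → IntervalIntegrable g volume a b :=
    fun ha hb => hg.mono_set (by rw [uIcc_of_le hAB]; exact uIcc_subset_Icc ha hb)
  have htrunc : ∀ᶠ ε : ℝ in 𝓝[>] 0,
      IntervalIntegrable g volume A (s - ε) ∧ IntervalIntegrable g volume (s + ε) B := by
    filter_upwards [eventually_lt_sub_and_add_lt hs] with ε ⟨hε, hA, hB⟩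
    exact ⟨hsub (left_mem_Icc.2 hAB) ⟨hA.le, by linarith⟩,
      hsub ⟨by linarith, hB.le⟩ (right_mem_Icc.2 hAB)⟩
  have hprim : ContinuousAt (fun x => ∫ r in A..x, g r) s :=
    (continuousOn_primitive_interval' hg left_mem_uIcc).continuousAt
      (by rw [uIcc_of_le hAB]; exact Icc_mem_nhds hs.1 hs.2)
  have hleft : Tendsto (fun ε : ℝ => s - ε) (𝓝[>] 0) (𝓝 s) :=
    tendsto_nhdsWithin_of_tendsto_nhds (Continuous.tendsto' (by fun_prop) _ _ (sub_zero s))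
  have hright : Tendsto (fun ε : ℝ => s + ε) (𝓝[>] 0) (𝓝 s) :=
    tendsto_nhdsWithin_of_tendsto_nhds (Continuous.tendsto' (by fun_prop) _ _ (add_zero s))
  have hlim := (hprim.tendsto.comp hleft).add
    ((hprim.tendsto.comp hright).const_sub (∫ r in A..B, g r))
  rw [add_sub_cancel] at hlim
  refine ⟨htrunc, hlim.congr' ?_⟩
  filter_upwards [htrunc] with ε hε
  simp only [Function.comp_apply]
  rw [integral_interval_sub_left hg (hg.trans hε.2.symm)]

lemma hasPVIntegral_inv_sub (hs : s ∈ Ioo A B) :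
    HasPVIntegral (fun r : ℝ => (r - s)⁻¹) A B s (Real.log (B - s) - Real.log (s - A)) := by
  have havoid : ∀ᶠ ε : ℝ in 𝓝[>] 0, s ∉ uIcc A (s - ε) ∧ s ∉ uIcc (s + ε) B := by
    filter_upwards [eventually_lt_sub_and_add_lt hs] with ε ⟨hε, _, _⟩
    exact ⟨notMem_uIcc_of_gt hs.1 (sub_lt_self s hε),
      notMem_uIcc_of_lt (lt_add_of_pos_right s hε) hs.2⟩
  refine ⟨havoid.mono fun ε hε => ?_, tendsto_const_nhds.congr' ?_⟩
  · exact ⟨intervalIntegrable_sub_inv_iff.2 (.inr hε.1),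
      intervalIntegrable_sub_inv_iff.2 (.inr hε.2)⟩
  · filter_upwards [havoid] with ε hε
    rw [integral_inv_sub hε.1, integral_inv_sub hε.2, sub_sub_cancel_left, add_sub_cancel_left,
      Real.log_neg_eq_log, ← Real.log_neg_eq_log (A - s), neg_sub]
    ring

theorem hasPVIntegral_inv_sub_smul_of_intervalIntegrable_slope [CompleteSpace E]
    (hf : IntervalIntegrable (slope f s) volume A B) (hs : s ∈ Ioo A B) :
    HasPVIntegral (fun r => (r - s)⁻¹ • f r) A B s
      ((∫ r in A..B, slope f s r) + (Real.log (B - s) - Real.log (s - A)) • f s) := by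
  have hdecomp : ∀ r, (r - s)⁻¹ • f r = slope f s r + (r - s)⁻¹ • f s := fun r => by
    rw [slope_def_module, smul_sub, sub_add_cancel]
  simpa only [hdecomp] using
    (hasPVIntegral_of_intervalIntegrable hf hs).add ((hasPVIntegral_inv_sub hs).smul_const (f s))

lemma norm_slope_le_of_norm_sub_le {C γ r : ℝ} (hr : r ≠ s)
    (hf : ‖f r - f s‖ ≤ C * |r - s| ^ γ) : ‖slope f s r‖ ≤ C * |r - s| ^ (γ - 1) := by
  have hpos : 0 < |r - s| := abs_pos.2 (sub_ne_zero.2 hr)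
  calc ‖slope f s r‖ = ‖f r - f s‖ / |r - s| := by
        rw [slope_def_module, norm_smul, norm_inv, Real.norm_eq_abs, inv_mul_eq_div]
    _ ≤ C * |r - s| ^ γ / |r - s| := by gcongr
    _ = C * |r - s| ^ (γ - 1) := by rw [Real.rpow_sub_one hpos.ne', mul_div_assoc]

lemma intervalIntegrable_slope_of_norm_sub_le {a b C γ : ℝ} (hγ : 0 < γ)
    (hmeas : AEStronglyMeasurable f (volume.restrict (uIoc a b)))
    (hf : ∀ r ∈ uIoc a b, ‖f r - f s‖ ≤ C * |r - s| ^ γ) :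
    IntervalIntegrable (slope f s) volume a b := by
  have hdom : IntervalIntegrable (fun r : ℝ => C * |r - s| ^ (γ - 1)) volume a b :=
    (intervalIntegrable_abs_sub_rpow (by linarith) a b s).const_mul C
  have hinv : Measurable fun r : ℝ => (r - s)⁻¹ := by fun_prop
  refine hdom.mono_fun (hinv.aestronglyMeasurable.smul (hmeas.sub aestronglyMeasurable_const)) ?_
  filter_upwards [ae_restrict_mem measurableSet_uIoc, Measure.ae_ne _ s] with r hr hrs
  exact (norm_slope_le_of_norm_sub_le hrs (hf r hr)).trans (le_abs_self _)

theorem pv_integral_exists_of_holder_general [CompleteSpace E] {C γ : ℝ} (hγ : 0 < γ)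
    (hs : s ∈ Ioo A B) (hmeas : AEStronglyMeasurable f (volume.restrict (Icc A B)))
    (hf : ∀ r ∈ Icc A B, ‖f r - f s‖ ≤ C * |r - s| ^ γ) :
    ∃ L : E, HasPVIntegral (fun r => (r - s)⁻¹ • f r) A B s L := by
  have hsub : uIoc A B ⊆ Icc A B := by
    rw [uIoc_of_le (hs.1.trans hs.2).le]
    exact Ioc_subset_Icc_self
  exact ⟨_, hasPVIntegral_inv_sub_smul_of_intervalIntegrable_slope
    (intervalIntegrable_slope_of_norm_sub_le hγ (hmeas.mono_set hsub)
      fun r hr => hf r (hsub hr)) hs⟩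

end PrincipalValue

/-- For a Hölder continuous function `f` on `[A,B]` and `s ∈ (A,B)`, the principal
value integral `PV ∫_A^B f(r)/(r−s) dr` exists. -/
theorem pv_integral_exists_of_holder (A B : ℝ) (hAB : A < B) (f : ℝ → ℝ)
    (γ : ℝ) (hγ : γ ∈ Set.Ioc (0 : ℝ) 1) (C : ℝ) (hC : 0 ≤ C)
    (hf : ∀ r ∈ Set.Icc A B, ∀ r' ∈ Set.Icc A B, |f r - f r'| ≤ C * |r - r'| ^ γ)
    (s : ℝ) (hs : s ∈ Set.Ioo A B) :
    ∃ L : ℝ, Tendsto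
      (fun ε : ℝ => (∫ r in A..(s - ε), f r / (r - s)) + ∫ r in (s + ε)..B, f r / (r - s))
      (𝓝[>] 0) (𝓝 L) := by
  have hcont : ContinuousOn f (Set.Icc A B) :=
    (holderOnWith_of_dist_le (C := ⟨C, hC⟩) (γ := ⟨γ, hγ.1.le⟩) hf).continuousOn hγ.1
  obtain ⟨L, hL⟩ := pv_integral_exists_of_holder_general hγ.1 hs
    (hcont.aestronglyMeasurable measurableSet_Icc)
    fun r hr => hf r hr s (Set.Ioo_subset_Icc_self hs)
  exact ⟨L, by simpa only [smul_eq_mul, inv_mul_eq_div] using hL.tendsto⟩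
end

section
/- Let A < B be real numbers, let α ∈ (0,1), and let s ∈ (A,B). Then the principal value integral exists and (1/π) PV ∫_A^B ((B−r)/(r−A))^α / (r−s) dr = ( cos(πα) ((B−s)/(s−A))^α − 1 ) / sin(πα). -/
open Filter Topology intervalIntegral

/-!
With `β(r) = (B - r)^(α - 1) (r - A)^(-α)` the integrand is `(B - s) β(r) / (r - s) - β(r)`, and
`∫ β = Γ(α) Γ(1 - α) = π / sin (π α)`. To the right of `s`, the cross-ratio substitution
`x = (B - r)(s - A) / ((r - A)(B - s))` turns `∫ β(r) / (r - s) dr` into `β(s)` times the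
incomplete beta function `B_x(α, 0)`; the reflection `r ↦ A + B - r` exchanges `α` and `1 - α` and
reduces the left side to the right one. The logarithmic divergences at `s` cancel, since the speed
of the cross-ratio at `s` is invariant under the reflection. What remains is the difference of the
finite parts of `B(α, 0)` and `B(1 - α, 0)`; expanding `1 / (1 - t)` geometrically identifies it
with Euler's partial fraction series for `π cot (π α)`.
-/

section

open MeasureTheory Set Real

section PrincipalValue

variable {E : Type*} [NormedAddCommGroup E] [NormedSpace ℝ E] {f g : ℝ → E} {A B s : ℝ} {L M : E}

/-- `L` is the Cauchy principal value of `∫_A^B f` at the interior singularity `s`. Integrability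
away from `s` is part of the notion, so that the truncated integrals are never junk values. -/
structure HasPrincipalValue (f : ℝ → E) (A B s : ℝ) (L : E) : Prop where
  intervalIntegrable_left : ∀ c ∈ Ioo A s, IntervalIntegrable f volume A c
  intervalIntegrable_right : ∀ c ∈ Ioo s B, IntervalIntegrable f volume c B
  tendsto : Tendsto (fun ε : ℝ => (∫ r in A..(s - ε), f r) + ∫ r in (s + ε)..B, f r)
    (𝓝[>] 0) (𝓝 L)

theorem tendsto_const_sub_nhdsGT_zero (s : ℝ) : Tendsto (fun ε => s - ε) (𝓝[>] 0) (𝓝[<] s) := by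
  refine tendsto_nhdsWithin_iff.2 ⟨?_, ?_⟩
  · have h : ContinuousAt (fun ε => s - ε) 0 := by fun_prop
    simpa using h.tendsto.mono_left nhdsWithin_le_nhds
  · filter_upwards [self_mem_nhdsWithin] with ε hε using sub_lt_self s hε

theorem tendsto_const_add_nhdsGT_zero (s : ℝ) : Tendsto (fun ε => s + ε) (𝓝[>] 0) (𝓝[>] s) := by
  refine tendsto_nhdsWithin_iff.2 ⟨?_, ?_⟩
  · have h : ContinuousAt (fun ε => s + ε) 0 := by fun_prop
    simpa using h.tendsto.mono_left nhdsWithin_le_nhds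
  · filter_upwards [self_mem_nhdsWithin] with ε hε using lt_add_of_pos_right s hε

theorem eventually_sub_mem_Ioo_and_add_mem_Ioo (hs : s ∈ Ioo A B) :
    ∀ᶠ ε in 𝓝[>] 0, s - ε ∈ Ioo A s ∧ s + ε ∈ Ioo s B :=
  ((tendsto_const_sub_nhdsGT_zero s).eventually (Ioo_mem_nhdsLT hs.1)).and
    ((tendsto_const_add_nhdsGT_zero s).eventually (Ioo_mem_nhdsGT hs.2))

theorem hasPrincipalValue_of_intervalIntegrable (hf : IntervalIntegrable f volume A B)
    (hs : s ∈ Ioo A B) : HasPrincipalValue f A B s (∫ r in A..B, f r) := by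
  have hAB : A ≤ B := (hs.1.trans hs.2).le
  have hsub : ∀ {c d}, c ∈ Icc A B → d ∈ Icc A B → IntervalIntegrable f volume c d :=
    fun hc hd => hf.mono_set (uIcc_subset_uIcc (by rwa [uIcc_of_le hAB]) (by rwa [uIcc_of_le hAB]))
  have hA : A ∈ Icc A B := left_mem_Icc.2 hAB
  have hB : B ∈ Icc A B := right_mem_Icc.2 hAB
  refine ⟨fun c hc => hsub hA ⟨hc.1.le, (hc.2.trans hs.2).le⟩,
    fun c hc => hsub ⟨(hs.1.trans hc.1).le, hc.2.le⟩ hB, ?_⟩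
  have hprim : ContinuousAt (fun x => ∫ r in A..x, f r) s :=
    (continuousOn_primitive_interval' hf left_mem_uIcc).continuousAt
      (by rw [uIcc_of_le hAB]; exact Icc_mem_nhds hs.1 hs.2)
  have hlim := (hprim.tendsto.comp
      ((tendsto_const_sub_nhdsGT_zero s).mono_right nhdsWithin_le_nhds)).add
    ((hprim.tendsto.comp
      ((tendsto_const_add_nhdsGT_zero s).mono_right nhdsWithin_le_nhds)).const_sub
        (∫ r in A..B, f r))
  rw [add_sub_cancel] at hlim
  refine hlim.congr' ?_
  filter_upwards [eventually_sub_mem_Ioo_and_add_mem_Ioo hs] with ε ⟨_, hε⟩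
  have hε' : s + ε ∈ Icc A B := ⟨(hs.1.trans hε.1).le, hε.2.le⟩
  simp only [Function.comp_apply]
  rw [← integral_interval_sub_left (hsub hA hB) (hsub hA hε')]

theorem HasPrincipalValue.congr (hf : HasPrincipalValue f A B s L) (hs : s ∈ Ioo A B)
    (hfg : EqOn f g (Ioo A B \ {s})) : HasPrincipalValue g A B s L := by
  have hleft : ∀ c ∈ Ioo A s, EqOn f g (Ioo A c) := fun c hc r hr =>
    hfg ⟨⟨hr.1, hr.2.trans (hc.2.trans hs.2)⟩, (hr.2.trans hc.2).ne⟩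
  have hright : ∀ c ∈ Ioo s B, EqOn f g (Ioo c B) := fun c hc r hr =>
    hfg ⟨⟨hs.1.trans (hc.1.trans hr.1), hr.2⟩, (hc.1.trans hr.1).ne'⟩
  refine ⟨fun c hc => (hf.intervalIntegrable_left c hc).congr_uIoo ?_,
    fun c hc => (hf.intervalIntegrable_right c hc).congr_uIoo ?_, hf.tendsto.congr' ?_⟩
  · rw [uIoo_of_le hc.1.le]
    exact hleft c hc
  · rw [uIoo_of_le hc.2.le]
    exact hright c hc
  · filter_upwards [eventually_sub_mem_Ioo_and_add_mem_Ioo hs] with ε ⟨hl, hr⟩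
    rw [integral_congr_Ioo_of_le hl.1.le (hleft _ hl),
      integral_congr_Ioo_of_le hr.2.le (hright _ hr)]

theorem HasPrincipalValue.sub (hf : HasPrincipalValue f A B s L)
    (hg : HasPrincipalValue g A B s M) (hs : s ∈ Ioo A B) :
    HasPrincipalValue (fun r => f r - g r) A B s (L - M) := by
  refine ⟨fun c hc => (hf.intervalIntegrable_left c hc).sub (hg.intervalIntegrable_left c hc),
    fun c hc => (hf.intervalIntegrable_right c hc).sub (hg.intervalIntegrable_right c hc),
    (hf.tendsto.sub hg.tendsto).congr' ?_⟩
  filter_upwards [eventually_sub_mem_Ioo_and_add_mem_Ioo hs] with ε ⟨hl, hr⟩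
  rw [integral_sub (hf.intervalIntegrable_left _ hl) (hg.intervalIntegrable_left _ hl),
    integral_sub (hf.intervalIntegrable_right _ hr) (hg.intervalIntegrable_right _ hr)]
  abel

theorem HasPrincipalValue.const_smul (hf : HasPrincipalValue f A B s L) (k : ℝ) :
    HasPrincipalValue (fun r => k • f r) A B s (k • L) := by
  refine ⟨fun c hc => (hf.intervalIntegrable_left c hc).smul k,
    fun c hc => (hf.intervalIntegrable_right c hc).smul k, (hf.tendsto.const_smul k).congr ?_⟩
  intro ε
  rw [intervalIntegral.integral_smul, intervalIntegral.integral_smul, smul_add]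

end PrincipalValue

section CotangentIntegral

variable {a : ℝ}

theorem hasSum_one_div_sub_add_one_div_add (ha : ∀ k : ℤ, (k : ℝ) ≠ a) :
    HasSum (fun n : ℕ => 1 / (a - (n + 1)) + 1 / (a + (n + 1))) (π * cot (π * a) - 1 / a) := by
  have hmem : (a : ℂ) ∈ Complex.integerComplement := by
    rintro ⟨k, hk⟩
    exact ha k (by exact_mod_cast hk)
  have hsum := (summable_cotTerm hmem).hasSum
  rw [← cot_series_rep' hmem] at hsum
  rw [← Complex.hasSum_ofReal]
  push_cast
  exact hsum

theorem integral_rpow_add_sub_rpow_sub (ha : |a| < 1) (n : ℕ) :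
    ∫ t in (0 : ℝ)..1, (t ^ (n + a) - t ^ (n - a)) = 1 / (a - (n + 1)) + 1 / (a + (n + 1)) := by
  obtain ⟨hneg, hpos⟩ := abs_lt.1 ha
  have : (0 : ℝ) ≤ n := n.cast_nonneg
  have hadd : -1 < n + a := by linarith
  have hsub : -1 < n - a := by linarith
  rw [integral_sub (intervalIntegrable_rpow' hadd) (intervalIntegrable_rpow' hsub),
    integral_rpow (.inl hadd), integral_rpow (.inl hsub), zero_rpow (by linarith),
    zero_rpow (by linarith), one_rpow, one_rpow]
  rw [← neg_sub (n + 1 : ℝ) a, one_div_neg_eq_neg_one_div]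
  ring

theorem integral_rpow_sub_rpow_neg_div_one_sub (ha0 : 0 < a) (ha1 : a < 1) :
    ∫ t in (0 : ℝ)..1, (t ^ a - t ^ (-a)) / (1 - t) = π * cot (π * a) - 1 / a := by
  have hna : ∀ k : ℤ, (k : ℝ) ≠ a := by
    rintro k rfl
    norm_cast at ha0 ha1
    lia
  have hcot := hasSum_one_div_sub_add_one_div_add hna
  have hval := integral_rpow_add_sub_rpow_sub (abs_lt.2 ⟨by linarith, ha1⟩)
  have hint (n : ℕ) : Integrable (fun t : ℝ => t ^ (n + a) - t ^ (n - a))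
      (volume.restrict (Ioc 0 1)) := by
    have : (0 : ℝ) ≤ n := n.cast_nonneg
    exact ((intervalIntegrable_iff_integrableOn_Ioc_of_le zero_le_one).1
      ((intervalIntegrable_rpow' (by linarith)).sub (intervalIntegrable_rpow' (by linarith))))
  have hnorm (n : ℕ) : ∫ t in Ioc (0 : ℝ) 1, ‖t ^ (n + a) - t ^ (n - a)‖ =
      -(1 / (a - (n + 1)) + 1 / (a + (n + 1))) := by
    rw [← hval, integral_of_le zero_le_one, ← MeasureTheory.integral_neg]
    refine setIntegral_congr_fun measurableSet_Ioc fun t ht => norm_of_nonpos ?_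
    exact sub_nonpos.2 (rpow_le_rpow_of_exponent_ge ht.1 ht.2 (by linarith))
  have hsum := hasSum_integral_of_summable_integral_norm hint
    (by simpa only [hnorm] using hcot.summable.neg)
  simp only [← integral_of_le zero_le_one, hval] at hsum
  rw [← hsum.unique hcot]
  refine integral_congr_Ioo_of_le zero_le_one fun t ht => ?_
  have hgeom : HasSum (fun n : ℕ => t ^ n * (t ^ a - t ^ (-a))) _ :=
    (hasSum_geometric_of_lt_one ht.1.le ht.2).mul_right _
  calc (t ^ a - t ^ (-a)) / (1 - t) = ∑' n : ℕ, t ^ n * (t ^ a - t ^ (-a)) := by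
        rw [hgeom.tsum_eq, div_eq_inv_mul]
    _ = ∑' n : ℕ, (t ^ (n + a) - t ^ (n - a)) := by
        simp only [sub_eq_add_neg (Nat.cast _ : ℝ), rpow_add ht.1, rpow_natCast, mul_sub]

end CotangentIntegral

section IncompleteBeta

variable {a x : ℝ}

/-- The incomplete beta function `B_x(a, 0)`, which diverges logarithmically as `x → 1`. -/
noncomputable def incompleteBetaZero (a x : ℝ) : ℝ :=
  ∫ t in (0 : ℝ)..x, t ^ (a - 1) / (1 - t)

/-- The Hadamard finite part of the divergent beta integral `B(a, 0)`, that is, the constant term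
in the expansion of `B_x(a, 0)` as `x → 1`. -/
noncomputable def betaZeroFinitePart (a : ℝ) : ℝ :=
  ∫ t in (0 : ℝ)..1, (t ^ (a - 1) - 1) / (1 - t)

theorem rpow_sub_one_sub_one_div_one_sub_le {t : ℝ} (ha : 0 ≤ a) (ht0 : 0 < t) (ht1 : t ≤ 1) :
    (t ^ (a - 1) - 1) / (1 - t) ≤ t ^ (a - 1) := by
  refine div_le_of_le_mul₀ (sub_nonneg.2 ht1) (rpow_nonneg ht0.le _) ?_
  have hmul : t ^ (a - 1) * t = t ^ a := by rw [rpow_sub_one ht0.ne', div_mul_cancel₀ _ ht0.ne']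
  linarith [rpow_le_one ht0.le ht1 ha]

theorem intervalIntegrable_rpow_sub_one_sub_one_div_one_sub (ha0 : 0 < a) (ha1 : a ≤ 1) :
    IntervalIntegrable (fun t : ℝ => (t ^ (a - 1) - 1) / (1 - t)) volume 0 1 := by
  refine (intervalIntegrable_rpow' (r := a - 1) (by linarith)).mono_fun'
    (by fun_prop : Measurable _).aestronglyMeasurable ?_
  rw [uIoc_of_le zero_le_one]
  refine ae_restrict_of_forall_mem measurableSet_Ioc fun t ht => ?_
  have hnonneg : 0 ≤ (t ^ (a - 1) - 1) / (1 - t) := div_nonneg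
    (sub_nonneg.2 (one_le_rpow_of_pos_of_le_one_of_nonpos ht.1 ht.2 (by linarith)))
    (sub_nonneg.2 ht.2)
  exact (norm_of_nonneg hnonneg).trans_le <|
    rpow_sub_one_sub_one_div_one_sub_le ha0.le ht.1 ht.2

theorem integral_one_sub_inv (hx : x < 1) : ∫ t in (0 : ℝ)..x, (1 - t)⁻¹ = -log (1 - x) := by
  rw [integral_comp_sub_left (fun t => t⁻¹), sub_zero,
    integral_inv_of_pos (sub_pos.2 hx) one_pos, one_div, log_inv]

theorem incompleteBetaZero_eq_integral_sub_log (ha0 : 0 < a) (ha1 : a ≤ 1) (hx : x ∈ Ico 0 1) :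
    incompleteBetaZero a x = (∫ t in (0 : ℝ)..x, (t ^ (a - 1) - 1) / (1 - t)) - log (1 - x) := by
  have hreg : IntervalIntegrable (fun t : ℝ => (t ^ (a - 1) - 1) / (1 - t)) volume 0 x :=
    (intervalIntegrable_rpow_sub_one_sub_one_div_one_sub ha0 ha1).mono_set (by
      rw [uIcc_of_le hx.1, uIcc_of_le zero_le_one]
      exact Icc_subset_Icc_right hx.2.le)
  have hpole : IntervalIntegrable (fun t : ℝ => (1 - t)⁻¹) volume 0 x := by
    refine ContinuousOn.intervalIntegrable (ContinuousOn.inv₀ (by fun_prop) fun t ht => ?_)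
    rw [uIcc_of_le hx.1] at ht
    exact sub_ne_zero.2 (ht.2.trans_lt hx.2).ne'
  rw [incompleteBetaZero, sub_eq_add_neg _ (log _), ← integral_one_sub_inv hx.2,
    ← integral_add hreg hpole]
  congr with t
  ring

theorem tendsto_incompleteBetaZero_add_log {u : ℝ → ℝ} {s k : ℝ} (ha0 : 0 < a) (ha1 : a ≤ 1)
    (hk : 0 < k) (hus : u s = 1) (hu : HasDerivWithinAt u (-k) (Ioi s) s) :
    Tendsto (fun r => incompleteBetaZero a (u r) + log (r - s)) (𝓝[>] s)
      (𝓝 (betaZeroFinitePart a - log k)) := by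
  have hslope : Tendsto (fun r => (1 - u r) / (r - s)) (𝓝[>] s) (𝓝 k) := by
    have h := ((hasDerivWithinAt_iff_tendsto_slope' self_notMem_Ioi).1 hu).neg
    rw [neg_neg] at h
    refine h.congr fun r => ?_
    rw [slope_def_field, hus, ← neg_div, neg_sub]
  have hu1 : Tendsto u (𝓝[>] s) (𝓝 1) := hus ▸ hu.continuousWithinAt.tendsto
  have hmem : ∀ᶠ r in 𝓝[>] s, u r ∈ Ico 0 1 := by
    filter_upwards [hu1.eventually (lt_mem_nhds one_pos), hslope.eventually (lt_mem_nhds hk),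
      self_mem_nhdsWithin] with r hpos hquot hr
    exact ⟨hpos.le, sub_pos.1 ((div_pos_iff_of_pos_right (sub_pos.2 hr)).1 hquot)⟩
  have hprim : ContinuousWithinAt (fun x => ∫ t in (0 : ℝ)..x, (t ^ (a - 1) - 1) / (1 - t))
      (uIcc 0 1) 1 := continuousOn_primitive_interval'
    (intervalIntegrable_rpow_sub_one_sub_one_div_one_sub ha0 ha1) left_mem_uIcc 1 right_mem_uIcc
  have hreg := hprim.tendsto.comp (tendsto_nhdsWithin_iff.2 ⟨hu1, hmem.mono fun r hr => by
    rw [uIcc_of_le zero_le_one]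
    exact Ico_subset_Icc_self hr⟩)
  refine (hreg.sub (hslope.log hk.ne')).congr' ?_
  filter_upwards [hmem, self_mem_nhdsWithin] with r hr hrs
  rw [log_div (sub_pos.2 hr.2).ne' (sub_pos.2 hrs).ne', Function.comp_apply,
    incompleteBetaZero_eq_integral_sub_log ha0 ha1 hr]
  ring

theorem betaZeroFinitePart_sub_betaZeroFinitePart_one_sub (ha0 : 0 < a) (ha1 : a < 1) :
    betaZeroFinitePart a - betaZeroFinitePart (1 - a) = π * cot (π * a) := by
  have hrpow : IntervalIntegrable (fun t : ℝ => t ^ (a - 1)) volume 0 1 :=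
    intervalIntegrable_rpow' (by linarith)
  have hleft := intervalIntegrable_rpow_sub_one_sub_one_div_one_sub ha0 ha1.le
  have hright := intervalIntegrable_rpow_sub_one_sub_one_div_one_sub (sub_pos.2 ha1)
    (sub_le_self 1 ha0.le)
  have hone : ∫ t in (0 : ℝ)..1, t ^ (a - 1) = 1 / a := by
    rw [integral_rpow (.inl (by linarith)), sub_add_cancel, one_rpow, zero_rpow ha0.ne', sub_zero]
  have hsplit : EqOn (fun t : ℝ => (t ^ (a - 1) - 1) / (1 - t) - (t ^ (1 - a - 1) - 1) / (1 - t) -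
      t ^ (a - 1)) (fun t => (t ^ a - t ^ (-a)) / (1 - t)) (Ioo 0 1) := fun t ht => by
    have ht1 : 1 - t ≠ 0 := (sub_pos.2 ht.2).ne'
    have hmul : t ^ a = t ^ (a - 1) * t := by
      rw [rpow_sub_one ht.1.ne', div_mul_cancel₀ _ ht.1.ne']
    simp only [hmul, sub_right_comm (1 : ℝ) a 1, sub_self, zero_sub]
    field
  have hcot := integral_rpow_sub_rpow_neg_div_one_sub ha0 ha1
  rw [← integral_congr_Ioo_of_le zero_le_one hsplit, integral_sub (hleft.sub hright) hrpow,
    integral_sub hleft hright, hone] at hcot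
  exact sub_left_injective hcot

end IncompleteBeta

section BetaIntegral

variable {A B p q : ℝ}

theorem integral_sub_rpow_mul_sub_rpow (hAB : A < B) (hp : 0 < p) (hq : 0 < q) :
    ∫ r in A..B, (B - r) ^ (p - 1) * (r - A) ^ (q - 1) =
      (B - A) ^ (p + q - 1) * ProbabilityTheory.beta p q := by
  have hBA : 0 < B - A := sub_pos.2 hAB
  have hbeta : Complex.betaIntegral q p = (ProbabilityTheory.beta p q : ℂ) := by
    rw [Complex.betaIntegral_eq_Gamma_mul_div q p hq hp, ProbabilityTheory.beta, mul_comm, add_comm]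
    simp only [Complex.ofReal_div, Complex.ofReal_mul, ← Complex.Gamma_ofReal, Complex.ofReal_add]
  have hscaled := Complex.betaIntegral_scaled q p hBA
  rw [hbeta] at hscaled
  rw [← Complex.ofReal_inj, ← intervalIntegral.integral_ofReal, Complex.ofReal_mul,
    Complex.ofReal_cpow hBA.le]
  push_cast
  rw [add_comm (p : ℂ), ← Complex.ofReal_sub B A, ← hscaled, ← sub_self A,
    ← integral_comp_sub_right]
  refine integral_congr_Ioo_of_le hAB.le fun r hr => ?_
  simp only [Complex.ofReal_cpow (sub_pos.2 hr.1).le, Complex.ofReal_cpow (sub_pos.2 hr.2).le]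
  push_cast
  ring_nf

theorem intervalIntegrable_sub_rpow_mul_sub_rpow (hAB : A < B) (hp : 0 < p) (hq : 0 < q) :
    IntervalIntegrable (fun r => (B - r) ^ (p - 1) * (r - A) ^ (q - 1)) volume A B := by
  apply intervalIntegrable_of_integral_ne_zero
  rw [integral_sub_rpow_mul_sub_rpow hAB hp hq]
  exact (mul_pos (rpow_pos_of_pos (sub_pos.2 hAB) _) (ProbabilityTheory.beta_pos hp hq)).ne'

end BetaIntegral

section JacobiWeight

variable {A B α s r c : ℝ}

/-- The Jacobi weight on `(A, B)` whose exponents `α - 1` and `-α` add up to `-1`. Together with the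
Cauchy kernel `1 / (r - s)` the total exponent is `-2`, so that up to a constant factor the
integrand does not change its form under Möbius substitutions. -/
noncomputable def jacobiWeight (A B α r : ℝ) : ℝ := (B - r) ^ (α - 1) * (r - A) ^ (-α)

theorem jacobiWeight_reflect (A B α r : ℝ) :
    jacobiWeight A B α (A + B - r) = jacobiWeight A B (1 - α) r := by
  simp only [jacobiWeight]
  ring_nf

theorem div_rpow_eq_sub_mul_jacobiWeight (hr : r ∈ Ioo A B) :
    ((B - r) / (r - A)) ^ α = (B - r) * jacobiWeight A B α r := by
  have hA : 0 < r - A := sub_pos.2 hr.1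
  have hB : 0 < B - r := sub_pos.2 hr.2
  rw [jacobiWeight, div_rpow hB.le hA.le, rpow_sub_one hB.ne', rpow_neg hA.le]
  field

theorem div_rpow_div_sub_eq (hr : r ∈ Ioo A B) (hrs : r ≠ s) :
    ((B - r) / (r - A)) ^ α / (r - s) =
      (B - s) * (jacobiWeight A B α r / (r - s)) - jacobiWeight A B α r := by
  have hne : r - s ≠ 0 := sub_ne_zero.2 hrs
  rw [div_rpow_eq_sub_mul_jacobiWeight hr]
  field

theorem integral_jacobiWeight (hAB : A < B) (hα : α ∈ Ioo 0 1) :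
    ∫ r in A..B, jacobiWeight A B α r = π / sin (π * α) := by
  have hbeta := integral_sub_rpow_mul_sub_rpow hAB hα.1 (sub_pos.2 hα.2)
  rw [add_sub_cancel, sub_self, rpow_zero, one_mul, ProbabilityTheory.beta, add_sub_cancel,
    Gamma_one, div_one, Gamma_mul_Gamma_one_sub] at hbeta
  simpa only [jacobiWeight, sub_right_comm (1 : ℝ) α 1, sub_self, zero_sub] using hbeta

theorem intervalIntegrable_jacobiWeight (hAB : A < B) (hα : α ∈ Ioo 0 1) :
    IntervalIntegrable (jacobiWeight A B α) volume A B := by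
  simpa only [sub_right_comm (1 : ℝ) α 1, sub_self, zero_sub] using!
    intervalIntegrable_sub_rpow_mul_sub_rpow hAB hα.1 (sub_pos.2 hα.2)

theorem intervalIntegrable_jacobiWeight_div_sub {a b : ℝ} (hAB : A < B) (hα : α ∈ Ioo 0 1)
    (hab : uIcc a b ⊆ Icc A B) (hs : s ∉ uIcc a b) :
    IntervalIntegrable (fun r => jacobiWeight A B α r / (r - s)) volume a b := by
  simp only [div_eq_mul_inv]
  refine ((intervalIntegrable_jacobiWeight hAB hα).mono_set (by rwa [uIcc_of_le hAB.le])
    ).mul_continuousOn (ContinuousOn.inv₀ (by fun_prop) fun r hr => ?_)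
  exact sub_ne_zero.2 (ne_of_mem_of_not_mem hr hs)

/-- The cross-ratio of `B, A` and `r, s`, the Möbius coordinate on `(s, B)` that sends `s` to `1`
and `B` to `0`. -/
noncomputable def crossRatio (A B s r : ℝ) : ℝ :=
  (B - r) * (s - A) / ((r - A) * (B - s))

theorem crossRatio_self (hs : s ∈ Ioo A B) : crossRatio A B s s = 1 := by
  have hA : s - A ≠ 0 := (sub_pos.2 hs.1).ne'
  have hB : B - s ≠ 0 := (sub_pos.2 hs.2).ne'
  rw [crossRatio]
  field

theorem crossRatio_right (A B s : ℝ) : crossRatio A B s B = 0 := by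
  simp only [crossRatio, sub_self, zero_mul, zero_div]

theorem hasDerivAt_crossRatio (hr : r ≠ A) (hs : s ≠ B) :
    HasDerivAt (crossRatio A B s) (-((s - A) * (B - A) / ((B - s) * (r - A) ^ 2))) r := by
  have hA : r - A ≠ 0 := sub_ne_zero.2 hr
  have hB : B - s ≠ 0 := sub_ne_zero.2 hs.symm
  have hquot := (((hasDerivAt_id r).const_sub B).mul_const (s - A)).div
    (((hasDerivAt_id r).sub_const A).mul_const (B - s)) (mul_ne_zero hA hB)
  refine hquot.congr_deriv ?_
  simp only [id]
  field

theorem hasDerivAt_crossRatio_self (hs : s ∈ Ioo A B) :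
    HasDerivAt (crossRatio A B s) (-((B - A) / ((s - A) * (B - s)))) s := by
  have hA : s - A ≠ 0 := (sub_pos.2 hs.1).ne'
  refine (hasDerivAt_crossRatio hs.1.ne' hs.2.ne).congr_deriv ?_
  field

theorem jacobiWeight_div_sub_eq (hs : s ∈ Ioo A B) (hr : r ∈ Ioo s B) :
    jacobiWeight A B α r / (r - s) = -jacobiWeight A B α s *
      (crossRatio A B s r ^ (α - 1) / (1 - crossRatio A B s r) *
        -((s - A) * (B - A) / ((B - s) * (r - A) ^ 2))) := by
  have hsA : 0 < s - A := sub_pos.2 hs.1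
  have hsB : 0 < B - s := sub_pos.2 hs.2
  have hrA : 0 < r - A := sub_pos.2 (hs.1.trans hr.1)
  have hrB : 0 < B - r := sub_pos.2 hr.2
  have hrs : 0 < r - s := sub_pos.2 hr.1
  have hBA : 0 < B - A := sub_pos.2 (hs.1.trans hs.2)
  have hone_sub : 1 - crossRatio A B s r = (r - s) * (B - A) / ((r - A) * (B - s)) := by
    rw [crossRatio]
    field
  rw [hone_sub, crossRatio, jacobiWeight, jacobiWeight, div_rpow (by positivity) (by positivity),
    mul_rpow hrB.le hsA.le, mul_rpow hrA.le hsB.le, rpow_sub_one hsA.ne', rpow_sub_one hrA.ne',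
    rpow_neg hsA.le, rpow_neg hrA.le]
  field

theorem integral_jacobiWeight_div_sub (hs : s ∈ Ioo A B) (hc : c ∈ Ioo s B) :
    ∫ r in c..B, jacobiWeight A B α r / (r - s) =
      jacobiWeight A B α s * incompleteBetaZero α (crossRatio A B s c) := by
  have hderiv : ∀ r ∈ Icc c B, HasDerivAt (crossRatio A B s) _ r :=
    fun r hr => hasDerivAt_crossRatio ((hs.1.trans hc.1).trans_le hr.1).ne' hs.2.ne
  have hsubst := integral_comp_mul_deriv_of_deriv_nonpos (a := c) (b := B)
    (g := fun t => t ^ (α - 1) / (1 - t))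
    (by rw [uIcc_of_le hc.2.le]; exact fun r hr => (hderiv r hr).continuousAt.continuousWithinAt)
    (by rw [min_eq_left hc.2.le, max_eq_right hc.2.le]
        exact fun r hr => hderiv r (Ioo_subset_Icc_self hr))
    (fun r _ => neg_nonpos.2 <| div_nonneg
      (mul_pos (sub_pos.2 hs.1) (sub_pos.2 (hs.1.trans hs.2))).le
      (mul_nonneg (sub_pos.2 hs.2).le (sq_nonneg _)))
  rw [crossRatio_right, integral_symm 0] at hsubst
  rw [integral_congr_Ioo_of_le hc.2.le fun r hr =>
      jacobiWeight_div_sub_eq hs ⟨hc.1.trans hr.1, hr.2⟩,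
    intervalIntegral.integral_const_mul, incompleteBetaZero, ← neg_eq_iff_eq_neg.2 hsubst,
    neg_mul_comm]
  rfl

theorem tendsto_integral_jacobiWeight_div_sub_add_log (hα0 : 0 < α) (hα1 : α ≤ 1)
    (hs : s ∈ Ioo A B) :
    Tendsto (fun c => (∫ r in c..B, jacobiWeight A B α r / (r - s)) +
        jacobiWeight A B α s * log (c - s)) (𝓝[>] s)
      (𝓝 (jacobiWeight A B α s *
        (betaZeroFinitePart α - log ((B - A) / ((s - A) * (B - s)))))) := by
  have hspeed : 0 < (B - A) / ((s - A) * (B - s)) := div_pos (sub_pos.2 (hs.1.trans hs.2))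
    (mul_pos (sub_pos.2 hs.1) (sub_pos.2 hs.2))
  refine ((tendsto_incompleteBetaZero_add_log hα0 hα1 hspeed (crossRatio_self hs)
    (hasDerivAt_crossRatio_self hs).hasDerivWithinAt).const_mul _).congr' ?_
  filter_upwards [Ioo_mem_nhdsGT hs.2] with c hc
  rw [integral_jacobiWeight_div_sub hs hc, mul_add]

theorem integral_jacobiWeight_div_sub_reflect (A B α s c : ℝ) :
    ∫ r in A..c, jacobiWeight A B α r / (r - s) =
      -∫ r in (A + B - c)..B, jacobiWeight A B (1 - α) r / (r - (A + B - s)) := by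
  have hsubst := integral_comp_sub_left (a := A) (b := c)
    (fun r => jacobiWeight A B (1 - α) r / (r - (A + B - s))) (A + B)
  rw [add_sub_cancel_left] at hsubst
  rw [← hsubst, ← intervalIntegral.integral_neg]
  congr with r
  rw [jacobiWeight_reflect, sub_sub_cancel, sub_sub_sub_cancel_left, ← div_neg, neg_sub]

theorem hasPrincipalValue_jacobiWeight_div_sub (hα : α ∈ Ioo 0 1) (hs : s ∈ Ioo A B) :
    HasPrincipalValue (fun r => jacobiWeight A B α r / (r - s)) A B s
      (π * cot (π * α) * jacobiWeight A B α s) := by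
  have hAB : A < B := hs.1.trans hs.2
  refine ⟨fun c hc => intervalIntegrable_jacobiWeight_div_sub hAB hα ?_ ?_,
    fun c hc => intervalIntegrable_jacobiWeight_div_sub hAB hα ?_ ?_, ?_⟩
  · rw [uIcc_of_le hc.1.le]
    exact Icc_subset_Icc_right (hc.2.trans hs.2).le
  · rw [uIcc_of_le hc.1.le]
    exact fun h => hc.2.not_ge h.2
  · rw [uIcc_of_le hc.2.le]
    exact Icc_subset_Icc_left (hs.1.trans hc.1).le
  · rw [uIcc_of_le hc.2.le]
    exact fun h => hc.1.not_ge h.1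
  have hs' : A + B - s ∈ Ioo A B := ⟨by linarith [hs.2], by linarith [hs.1]⟩
  have hright := (tendsto_integral_jacobiWeight_div_sub_add_log hα.1 hα.2.le hs).comp
    (tendsto_const_add_nhdsGT_zero s)
  have hleft := (tendsto_integral_jacobiWeight_div_sub_add_log (sub_pos.2 hα.2)
    (sub_le_self 1 hα.1.le) hs').comp (tendsto_const_add_nhdsGT_zero (A + B - s))
  have hlim := hright.sub hleft
  have hspeed : (A + B - s - A) * (B - (A + B - s)) = (s - A) * (B - s) := by ring
  rw [jacobiWeight_reflect, sub_sub_cancel, hspeed, ← mul_sub, sub_sub_sub_cancel_right,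
    betaZeroFinitePart_sub_betaZeroFinitePart_one_sub hα.1 hα.2, mul_comm] at hlim
  refine hlim.congr fun ε => ?_
  rw [integral_jacobiWeight_div_sub_reflect, ← sub_add (A + B) s ε]
  simp only [Function.comp_apply, add_sub_cancel_left]
  ring

end JacobiWeight

end

/-- The finite Hilbert transform of the weight `a(r)^{-1} = ((B−r)/(r−A))^α`:
`(1/π) PV ∫_A^B ((B−r)/(r−A))^α/(r−s) dr = (cos(πα)((B−s)/(s−A))^α − 1)/sin(πα)`. -/
theorem hilbert_transform_of_inverse_weight (A B : ℝ) (hAB : A < B)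
    (α : ℝ) (hα : α ∈ Set.Ioo (0 : ℝ) 1) (s : ℝ) (hs : s ∈ Set.Ioo A B) :
    Tendsto
      (fun ε : ℝ =>
        (∫ r in A..(s - ε), ((B - r) / (r - A)) ^ α / (r - s)) +
          ∫ r in (s + ε)..B, ((B - r) / (r - A)) ^ α / (r - s))
      (𝓝[>] 0)
      (𝓝 (Real.pi *
        ((Real.cos (Real.pi * α) * ((B - s) / (s - A)) ^ α - 1) / Real.sin (Real.pi * α)))) := by
  have hsplit : Set.EqOn
      (fun r => (B - s) • (jacobiWeight A B α r / (r - s)) - jacobiWeight A B α r)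
      (fun r => ((B - r) / (r - A)) ^ α / (r - s)) (Set.Ioo A B \ {s}) :=
    fun r hr => (div_rpow_div_sub_eq hr.1 hr.2).symm
  have hpv := (((hasPrincipalValue_jacobiWeight_div_sub hα hs).const_smul (B - s)).sub
    (hasPrincipalValue_of_intervalIntegrable (intervalIntegrable_jacobiWeight hAB hα) hs)
    hs).congr hs hsplit
  convert hpv.tendsto using 2
  rw [div_rpow_eq_sub_mul_jacobiWeight hs, integral_jacobiWeight hAB hα,
    Real.cot_eq_cos_div_sin, smul_eq_mul]
  ring
end
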